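/- Let R = K[x_1,…,x_m,y_1,…,y_n]/(f) be an ℕ²-graded hypersurface with deg x_i = (1,0), deg y_j = (0,1), and f homogeneous of degree (d,e). For a diagonal Δ = (g,h)ℤ, the diagonal subalgebra R_Δ has Krull dimension m + n - 2. -/

import Mathlib

open MvPolynomial

universe u

/-- An injective integral ring extension preserves the Krull dimension. -/
theorem ringKrullDim_eq_of_isIntegral_of_faithfulSMul (A B : Type*) [CommRing A] [CommRing B]
    [Algebra A B] [Algebra.IsIntegral A B] [FaithfulSMul A B] :
    ringKrullDim B = ringKrullDim A := by
  apply le_antisymm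
  · refine Order.krullDim_le_of_strictMono (PrimeSpectrum.comap (algebraMap A B)) fun p q hpq ↦ ?_
    exact Ideal.IsIntegral.comap_lt_comap (R := A) hpq
  · refine iSup_le fun l ↦ ?_
    obtain ⟨Q, -, hQ, hQl⟩ := Ideal.exists_ideal_over_prime_of_isIntegral l.head.asIdeal
      (⊥ : Ideal B) (by
        rw [Ideal.comap_bot_of_injective _ (FaithfulSMul.algebraMap_injective A B)]
        exact bot_le)
    have : Q.LiesOver l.head.asIdeal := ⟨hQl.symm⟩
    obtain ⟨L, hL, -⟩ := Ideal.exists_ltSeries_of_hasGoingUp l Q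
    exact hL ▸ Order.LTSeries.length_le_krullDim L

/-- The Krull dimension of a finitely generated domain over a field is its transcendence degree. -/
theorem ringKrullDim_eq_of_trdeg_eq {K B : Type u} [Field K] [CommRing B] [IsDomain B]
    [Algebra K B] [Algebra.FiniteType K B] {r : ℕ} (hr : Algebra.trdeg K B = r) :
    ringKrullDim B = r := by
  obtain ⟨s, φ, hinj, hint⟩ := exists_integral_inj_algHom_of_fg K B
  algebraize [φ.toRingHom]
  have : FaithfulSMul (MvPolynomial (Fin s) K) B :=
    (faithfulSMul_iff_algebraMap_injective _ _).mpr hinj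
  have hs : s = r := by
    have h := trdeg_add_eq K (MvPolynomial (Fin s) K) (A := B)
    rw [trdeg_eq_zero (R := MvPolynomial (Fin s) K), MvPolynomial.trdeg_of_isDomain, hr] at h
    simpa using h
  rw [ringKrullDim_eq_of_isIntegral_of_faithfulSMul (MvPolynomial (Fin s) K) B,
    MvPolynomial.ringKrullDim_of_isNoetherianRing, ringKrullDim_eq_zero_of_field]
  simp [hs]

/-- The coordinate ring of an integral affine hypersurface has transcendence degree one less than
the number of variables. -/
theorem trdeg_of_ker_eq_span_singleton {K R σ : Type u} [Field K] [CommRing R] [IsDomain R]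
    [Algebra K R] [Fintype σ] (π : MvPolynomial σ K →ₐ[K] R) (hπ : Function.Surjective π)
    {f : MvPolynomial σ K} (hf : f ≠ 0) (hker : RingHom.ker π = Ideal.span {f}) :
    Algebra.trdeg K R = (Fintype.card σ - 1 : ℕ) := by
  classical
  have hker' (p : MvPolynomial σ K) : π p = 0 ↔ f ∣ p := by
    rw [← RingHom.mem_ker, hker, Ideal.mem_span_singleton]
  have haeval : aeval (fun j ↦ π (X j)) = π := by ext j; simp
  obtain ⟨i, hi⟩ : f.vars.Nonempty := by
    by_contra h
    rw [Finset.not_nonempty_iff_eq_empty, vars_eq_empty_iff_eq_C] at h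
    have h0 : coeff 0 f ≠ 0 := fun h0 ↦ hf (by rw [h, h0, C_0])
    have hunit : IsUnit f := h ▸ (IsUnit.mk0 _ h0).map C
    exact (hunit.map π).ne_zero ((hker' f).mpr dvd_rfl)
  have hind : AlgebraicIndependent K (fun j : {j // j ≠ i} ↦ π (X j.1)) := by
    rw [algebraicIndependent_iff]
    intro p hp
    have hp' : π (rename Subtype.val p) = 0 := by
      rw [← hp, ← haeval, aeval_rename, haeval]
      rfl
    obtain ⟨q, hq⟩ := (hker' _).mp hp'
    by_contra hp0
    have hr0 : rename (Subtype.val : {j // j ≠ i} → σ) p ≠ 0 :=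
      (map_ne_zero_iff _ (rename_injective _ Subtype.val_injective)).mpr hp0
    have hq0 : q ≠ 0 := by rintro rfl; simp [hq] at hr0
    have hvar : i ∈ (rename (Subtype.val : {j // j ≠ i} → σ) p).vars := by
      rw [mem_vars_iff_degreeOf_ne_zero] at hi ⊢
      rw [hq, degreeOf_mul_eq hf hq0]
      omega
    obtain ⟨j, -, hj⟩ := mem_vars_rename _ _ hvar
    exact j.2 hj
  have hlower := hind.cardinalMk_le_trdeg
  have hlt : Algebra.trdeg K R < (Fintype.card σ : ℕ) := by
    by_contra! hle
    have htop : Algebra.adjoin K (Set.range fun j : σ ↦ π (X j)) = ⊤ := by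
      rw [Algebra.adjoin_range_eq_range_aeval, haeval, AlgHom.range_eq_top]
      exact hπ
    have : Algebra.IsAlgebraic (Algebra.adjoin K (Set.range fun j : σ ↦ π (X j))) R :=
      ⟨fun x ↦ isAlgebraic_algebraMap (⟨x, htop ▸ trivial⟩ : Algebra.adjoin K _)⟩
    have hb := Algebra.IsAlgebraic.isTranscendenceBasis_of_le_trdeg_of_finite K
      (fun j : σ ↦ π (X j)) (by simpa using hle)
    refine hf (algebraicIndependent_iff.mp hb.1 f ?_)
    rw [haeval, hker']
  obtain ⟨r, hr⟩ := Cardinal.lt_aleph0.mp (hlt.trans Cardinal.natCast_lt_aleph0)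
  rw [hr] at hlower hlt ⊢
  have h1 : Fintype.card σ - 1 ≤ r := by
    simpa [Fintype.card_subtype_compl] using hlower
  have h2 : r < Fintype.card σ := by exact_mod_cast hlt
  congr 1
  omega

/-- Rescaling the variables along a linear functional of their weights rescales a weighted
homogeneous polynomial by the value of the functional at its weight. -/
theorem MvPolynomial.IsWeightedHomogeneous.aeval_C_mul_T {K R σ M : Type*} [CommRing K]
    [CommRing R] [Algebra K R] [AddCommMonoid M] {w : σ → M} {a : M} {p : MvPolynomial σ K}
    (hp : p.IsWeightedHomogeneous w a) (x : σ → R) (l : M →+ ℤ) :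
    aeval (fun i ↦ (LaurentPolynomial.C (x i) * LaurentPolynomial.T (l (w i)) :
        LaurentPolynomial R)) p =
      LaurentPolynomial.C (aeval x p) * LaurentPolynomial.T (l a) := by
  induction hp using IsWeightedHomogeneous.induction_on with
  | zero => simp
  | add p q _ _ hp hq => simp only [map_add, hp, hq, add_mul]
  | monomial s r hs =>
    subst hs
    have hT : s.prod (fun i k ↦ (LaurentPolynomial.T (l (w i)) : LaurentPolynomial R) ^ k) =
        LaurentPolynomial.T (l (Finsupp.weight w s)) := by
      classical
      induction s using Finsupp.induction_linear with
      | zero => simp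
      | add s t hs ht =>
        rw [Finsupp.prod_add_index' (by simp) (fun _ _ _ ↦ pow_add _ _ _), hs, ht, map_add, map_add,
          LaurentPolynomial.T_add]
      | single i k => simp [Finsupp.weight_single, LaurentPolynomial.T_pow]
    simp only [aeval_monomial, mul_pow, Finsupp.prod_mul, hT, map_mul]
    rw [mul_assoc, map_finsuppProd]
    simp [IsScalarTower.algebraMap_apply K R (LaurentPolynomial R)]

/-- If the weights of the summands of `S` are killed by a linear functional, then any nonzero
variable whose weight is not killed is transcendental over `S`. -/
theorem transcendental_of_weight_ne_zero {K R σ M : Type*} [Field K] [CommRing R] [IsDomain R]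
    [Algebra K R] [AddCommMonoid M] {w : σ → M} (π : MvPolynomial σ K →ₐ[K] R)
    (hπ : Function.Surjective π) {f : MvPolynomial σ K} {c : M}
    (hfhom : f.IsWeightedHomogeneous w c) (hker : RingHom.ker π = Ideal.span {f})
    (l : M →+ ℤ) (a : ℕ → M) (ha : ∀ k, l (a k) = 0) (S : Subalgebra K R)
    (hS : Subalgebra.toSubmodule S =
      ⨆ k, (weightedHomogeneousSubmodule K w (a k)).map π.toLinearMap)
    {i : σ} (hi : l (w i) ≠ 0) (hXi : π (X i) ≠ 0) : Transcendental S (π (X i)) := by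
  have haeval : aeval (fun j ↦ π (X j)) = π := by ext j; simp
  let Φ : MvPolynomial σ K →ₐ[K] LaurentPolynomial R := aeval fun j ↦
    LaurentPolynomial.C (π (X j)) * LaurentPolynomial.T (l (w j))
  have hΦ {p : MvPolynomial σ K} {b : M} (hp : p.IsWeightedHomogeneous w b) :
      Φ p = LaurentPolynomial.C (π p) * LaurentPolynomial.T (l b) := by
    simpa only [haeval] using hp.aeval_C_mul_T (fun j ↦ π (X j)) l
  have hle : RingHom.ker π.toRingHom ≤ RingHom.ker Φ.toRingHom := by
    change RingHom.ker π ≤ RingHom.ker Φ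
    have hf : π f = 0 := by
      rw [← RingHom.mem_ker, hker]
      exact Ideal.mem_span_singleton_self f
    rw [hker, Ideal.span_singleton_le_iff_mem, RingHom.mem_ker, hΦ hfhom, hf]
    simp
  let φ := AlgHom.liftOfSurjective π hπ Φ hle
  have hφ (p : MvPolynomial σ K) : φ (π p) = Φ p := AlgHom.liftOfSurjective_apply π hπ Φ hle p
  have hφS {s : R} (hs : s ∈ S) : φ s = LaurentPolynomial.C s := by
    rw [← Subalgebra.mem_toSubmodule, hS] at hs
    induction hs using Submodule.iSup_induction' with
    | mem k s hs =>
      obtain ⟨p, hp, rfl⟩ := hs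
      have := hΦ hp
      rw [ha, LaurentPolynomial.T_zero, mul_one, ← hφ] at this
      exact this
    | zero => simp
    | add s t _ _ hs ht => rw [map_add, hs, ht, map_add]
  rw [transcendental_iff]
  intro p hp
  ext k
  rw [Polynomial.aeval_eq_sum_range] at hp
  have hsum : ∑ j ∈ Finset.range (p.natDegree + 1),
      AddMonoidAlgebra.single ((j : ℤ) * l (w i)) ((p.coeff j : R) * π (X i) ^ j) =
        (0 : LaurentPolynomial R) := by
    rw [← map_zero φ, ← hp, map_sum]
    refine Finset.sum_congr rfl fun j _ ↦ ?_
    rw [Algebra.smul_def, map_mul, map_pow, hφ, hΦ (isWeightedHomogeneous_X K w i),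
      LaurentPolynomial.single_eq_C_mul_T, mul_pow, LaurentPolynomial.T_pow, map_mul, map_pow,
      mul_assoc]
    congr 1
    exact (hφS (p.coeff j).2).symm
  by_cases hk : k ∈ Finset.range (p.natDegree + 1)
  · have hcoeff := congrArg (fun q : LaurentPolynomial R ↦ q.coeff ((k : ℤ) * l (w i))) hsum
    simp only [AddMonoidAlgebra.coeff_sum, AddMonoidAlgebra.coeff_single,
      AddMonoidAlgebra.coeff_zero, Finsupp.coe_zero, Pi.zero_apply] at hcoeff
    rw [Finset.sum_apply', Finset.sum_eq_single k, Finsupp.single_eq_same] at hcoeff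
    · simpa [hXi] using hcoeff
    · intro j _ hjk
      refine Finsupp.single_eq_of_ne' fun h ↦ hjk ?_
      exact_mod_cast mul_right_cancel₀ hi h
    · exact fun h ↦ absurd hk h
  · rw [Polynomial.coeff_eq_zero_of_natDegree_lt (by simpa [Nat.lt_succ_iff] using hk)]
    simp

/-- The `ℕ²`-valued weight with `deg xᵢ = (1, 0)` and `deg yⱼ = (0, 1)`. -/
abbrev bidegreeWeight (σ τ : Type*) : σ ⊕ τ → ℕ × ℕ :=
  Sum.elim (fun _ ↦ (1, 0)) (fun _ ↦ (0, 1))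

theorem weight_bidegreeWeight {σ τ : Type*} [Fintype σ] [Fintype τ] (s : σ ⊕ τ →₀ ℕ) :
    Finsupp.weight (bidegreeWeight σ τ) s =
      ((Finsupp.sumFinsuppEquivProdFinsupp s).1.degree,
        (Finsupp.sumFinsuppEquivProdFinsupp s).2.degree) := by
  rw [Finsupp.weight_apply, Finsupp.sum_fintype _ _ (by simp), Fintype.sum_sum_type,
    Finsupp.degree_eq_sum, Finsupp.degree_eq_sum]
  ext <;> simp [Prod.fst_sum, Prod.snd_sum]

theorem degree_eq_weight_bidegreeWeight {σ τ : Type*} (s : σ ⊕ τ →₀ ℕ) :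
    s.degree = (Finsupp.weight (bidegreeWeight σ τ) s).1 +
      (Finsupp.weight (bidegreeWeight σ τ) s).2 := by
  induction s using Finsupp.induction_linear with
  | zero => simp
  | add s t hs ht =>
    rw [map_add, map_add, hs, ht, Prod.fst_add, Prod.snd_add, add_add_add_comm]
  | single i k => cases i <;> simp [Finsupp.weight_single]

/-- A monomial of bidegree at least `b` is divisible by one of bidegree exactly `b`. -/
theorem exists_le_weight_bidegreeWeight_eq {σ τ : Type*} [Fintype σ] [Fintype τ]
    (s : σ ⊕ τ →₀ ℕ) (b : ℕ × ℕ)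
    (hb : b ≤ Finsupp.weight (bidegreeWeight σ τ) s) :
    ∃ t ≤ s, Finsupp.weight (bidegreeWeight σ τ) t = b := by
  rw [weight_bidegreeWeight] at hb
  obtain ⟨t₁, ht₁, h₁⟩ := Finsupp.exists_le_degree_eq _ _ hb.1
  obtain ⟨t₂, ht₂, h₂⟩ := Finsupp.exists_le_degree_eq _ _ hb.2
  refine ⟨Finsupp.sumFinsuppEquivProdFinsupp.symm (t₁, t₂), ?_, ?_⟩
  · rintro (i | j)
    · simpa using ht₁ i
    · simpa using ht₂ j
  · rw [weight_bidegreeWeight, Equiv.apply_symm_apply, h₁, h₂]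

/-- Diagonal subalgebras of finitely generated bigraded algebras are finitely generated. -/
theorem diagonal_fg {K R σ τ : Type*} [Field K] [CommRing R] [Algebra K R] [Fintype σ]
    [Fintype τ] (π : MvPolynomial (σ ⊕ τ) K →ₐ[K] R) (g h : ℕ) (S : Subalgebra K R)
    (hS : Subalgebra.toSubmodule S = ⨆ k : ℕ,
      (weightedHomogeneousSubmodule K (bidegreeWeight σ τ) (g * k, h * k)).map π.toLinearMap) :
    S.FG := by
  let G : Set (σ ⊕ τ →₀ ℕ) := {s | Finsupp.weight (bidegreeWeight σ τ) s = (g, h)}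
  have hG : G.Finite := by
    refine (Finsupp.finite_of_degree_le (g + h)).subset fun s hs ↦ ?_
    rw [Set.mem_ofPred_eq, degree_eq_weight_bidegreeWeight, Set.mem_ofPred_eq.mp hs]
  have hmem {k : ℕ} {p : MvPolynomial (σ ⊕ τ) K}
      (hp : p.IsWeightedHomogeneous (bidegreeWeight σ τ) (g * k, h * k)) : π p ∈ S := by
    rw [← Subalgebra.mem_toSubmodule, hS]
    exact Submodule.mem_iSup_of_mem k ⟨p, hp, rfl⟩
  rw [Subalgebra.fg_def]
  refine ⟨(fun s ↦ π (monomial s 1)) '' G, hG.image _, le_antisymm ?_ ?_⟩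
  · rw [Algebra.adjoin_le_iff]
    rintro _ ⟨s, hs, rfl⟩
    exact hmem (k := 1) (isWeightedHomogeneous_monomial _ _ _ (by rw [mul_one, mul_one]; exact hs))
  · rw [← Subalgebra.toSubmodule.le_iff_le, hS]
    refine iSup_le fun k ↦ ?_
    rintro _ ⟨p, hp, rfl⟩
    have hmono (k : ℕ) (s : σ ⊕ τ →₀ ℕ)
        (hs : Finsupp.weight (bidegreeWeight σ τ) s = (g * k, h * k)) :
        π (monomial s 1) ∈ Algebra.adjoin K ((fun s ↦ π (monomial s 1)) '' G) := by
      induction k generalizing s with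
      | zero =>
        have : s = 0 := by
          simp [← Finsupp.degree_eq_zero_iff, degree_eq_weight_bidegreeWeight, hs]
        rw [this]
        simp
      | succ k ih =>
        obtain ⟨t, hts, ht⟩ := exists_le_weight_bidegreeWeight_eq s (g, h)
          (by rw [hs]; constructor <;> exact Nat.le_mul_of_pos_right _ k.succ_pos)
        obtain ⟨u, rfl⟩ := le_iff_exists_add.mp hts
        have hmul : monomial (t + u) (1 : K) = monomial t 1 * monomial u 1 := by simp
        rw [hmul, map_mul]
        refine mul_mem (Algebra.subset_adjoin ⟨t, ht, rfl⟩) (ih u ?_)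
        rw [map_add, ht, Prod.ext_iff] at hs
        simp only [Prod.fst_add, Prod.snd_add, mul_add, mul_one] at hs
        ext <;> simp <;> omega
    change p.IsWeightedHomogeneous _ _ at hp
    change π p ∈ Algebra.adjoin K ((fun s ↦ π (monomial s 1)) '' G)
    induction hp using IsWeightedHomogeneous.induction_on with
    | zero => simp
    | add p q _ _ hp hq => simpa using add_mem hp hq
    | monomial s r hs =>
      rw [← mul_one r, ← smul_eq_mul, ← smul_monomial, map_smul]
      exact Subalgebra.smul_mem _ (hmono k s hs) r

/-- If the kernel is principal, two distinct variables cannot both map to zero. -/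
theorem map_X_ne_zero_or {K R σ : Type*} [Field K] [CommRing R] [IsDomain R] [Algebra K R]
    (π : MvPolynomial σ K →ₐ[K] R) {f : MvPolynomial σ K}
    (hker : RingHom.ker π = Ideal.span {f}) {i j : σ} (hij : i ≠ j) :
    π (X i) ≠ 0 ∨ π (X j) ≠ 0 := by
  have hker' (p : MvPolynomial σ K) : π p = 0 ↔ f ∣ p := by
    rw [← RingHom.mem_ker, hker, Ideal.mem_span_singleton]
  by_contra! h
  rw [hker', hker'] at h
  have hunit : ¬ IsUnit f := fun hu ↦ (hu.map π).ne_zero ((hker' f).mpr dvd_rfl)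
  obtain ⟨q, hq⟩ := h.1
  have hqu := ((X_prime (R := K) (i := i)).irreducible.isUnit_or_isUnit hq).resolve_left hunit
  have hdvd : (X i : MvPolynomial σ K) ∣ f := hq ▸ (hqu.mul_right_dvd).mpr dvd_rfl
  exact hij (X_dvd_X.mp (hdvd.trans h.2))

/-- An integral bigraded hypersurface has transcendence degree one over each of its diagonal
subalgebras. -/
theorem trdeg_diagonal {K R σ τ : Type u} [Field K] [CommRing R] [IsDomain R]
    [Algebra K R] (π : MvPolynomial (σ ⊕ τ) K →ₐ[K] R) (hπ : Function.Surjective π)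
    {f : MvPolynomial (σ ⊕ τ) K} {c : ℕ × ℕ}
    (hfhom : f.IsWeightedHomogeneous (bidegreeWeight σ τ) c)
    (hker : RingHom.ker π = Ideal.span {f}) {g h : ℕ} (hg : 0 < g) (hh : 0 < h)
    (S : Subalgebra K R)
    (hS : Subalgebra.toSubmodule S = ⨆ k : ℕ,
      (weightedHomogeneousSubmodule K (bidegreeWeight σ τ) (g * k, h * k)).map π.toLinearMap)
    {a : σ} {b : τ} (ha : π (X (.inl a)) ≠ 0) (hb : π (X (.inr b)) ≠ 0) :
    Algebra.trdeg S R = 1 := by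
  have htr : Transcendental S (π (X (.inl a))) := by
    refine transcendental_of_weight_ne_zero π hπ hfhom hker
      (h • (Nat.castAddMonoidHom ℤ).comp (AddMonoidHom.fst ℕ ℕ) -
        g • (Nat.castAddMonoidHom ℤ).comp (AddMonoidHom.snd ℕ ℕ)) _ (fun k ↦ ?_) S hS ?_ ha
    · simp; ring
    · simpa using hh.ne'
  have hmem (i : σ) (j : τ) : π (X (.inl i)) ^ g * π (X (.inr j)) ^ h ∈ S := by
    rw [← Subalgebra.mem_toSubmodule, hS]
    refine Submodule.mem_iSup_of_mem 1 ⟨X (.inl i) ^ g * X (.inr j) ^ h, ?_, by simp⟩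
    have := ((isWeightedHomogeneous_X K (bidegreeWeight σ τ) (.inl i)).pow g).mul
      ((isWeightedHomogeneous_X K (bidegreeWeight σ τ) (.inr j)).pow h)
    simpa using this
  let x : PUnit.{u + 1} → R := fun _ ↦ π (X (.inl a))
  let B := Algebra.adjoin S (Set.range x)
  have hB {r : R} (hr : r ∈ B) : IsAlgebraic B r := isAlgebraic_algebraMap (⟨r, hr⟩ : B)
  have hxB : π (X (.inl a)) ∈ B := Algebra.subset_adjoin ⟨.unit, rfl⟩
  have hSB {s : R} (hs : s ∈ S) : s ∈ B := B.algebraMap_mem (⟨s, hs⟩ : S)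
  have hroot {r t : R} {N : ℕ} (hN : 0 < N) (hr : r ∈ B) (hr0 : r ≠ 0) (hrt : r * t ^ N ∈ B) :
      IsAlgebraic B t :=
    ((hB hr).of_mul (mem_nonZeroDivisors_of_ne_zero hr0) (hB hrt)).of_pow hN
  have hX (i : σ ⊕ τ) : IsAlgebraic B (π (X i)) := by
    rcases i with i | j
    · refine hroot hg (hSB (hmem a b)) (mul_ne_zero (pow_ne_zero _ ha) (pow_ne_zero _ hb)) ?_
      rw [mul_assoc, mul_comm (_ ^ h)]
      exact mul_mem (pow_mem hxB g) (hSB (hmem i b))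
    · exact hroot hh (pow_mem hxB g) (pow_ne_zero _ ha) (hSB (hmem a j))
  have halg : Algebra.IsAlgebraic B R := by
    refine ⟨fun r ↦ ?_⟩
    obtain ⟨p, rfl⟩ := hπ r
    induction p using MvPolynomial.induction_on with
    | C c =>
      rw [← algebraMap_eq, AlgHom.commutes]
      exact hB (hSB (S.algebraMap_mem c))
    | add p q hp hq => rw [map_add]; exact hp.add hq
    | mul_X p i hp => rw [map_mul]; exact hp.mul (hX i)
  have hbasis : IsTranscendenceBasis S x :=
    isTranscendenceBasis_iff_algebraicIndependent_isAlgebraic.mpr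
      ⟨algebraicIndependent_unique_type_iff.mpr htr, halg⟩
  rw [← hbasis.cardinalMk_eq_trdeg, Cardinal.mk_punit]

/-- The diagonal subalgebras of an integral bigraded hypersurface in `m + n` variables have Krull
dimension `m + n - 2`. -/
theorem ringKrullDim_diagonal {K R : Type} [Field K] [CommRing R] [IsDomain R] [Algebra K R]
    {m n : ℕ} (π : MvPolynomial (Fin m ⊕ Fin n) K →ₐ[K] R) (hπ : Function.Surjective π)
    {f : MvPolynomial (Fin m ⊕ Fin n) K} (hf : f ≠ 0) {c : ℕ × ℕ}
    (hfhom : f.IsWeightedHomogeneous (bidegreeWeight (Fin m) (Fin n)) c)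
    (hker : RingHom.ker π = Ideal.span {f}) (hm : 2 ≤ m) (hn : 2 ≤ n) {g h : ℕ}
    (hg : 0 < g) (hh : 0 < h) (S : Subalgebra K R)
    (hS : Subalgebra.toSubmodule S = ⨆ k : ℕ,
      (weightedHomogeneousSubmodule K (bidegreeWeight (Fin m) (Fin n)) (g * k, h * k)).map
        π.toLinearMap) :
    ringKrullDim S = (m + n - 2 : ℕ) := by
  obtain ⟨a, ha⟩ : ∃ a, π (X (.inl a)) ≠ 0 :=
    (map_X_ne_zero_or π hker (i := .inl ⟨0, by omega⟩) (j := .inl ⟨1, by omega⟩)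
      (by simp)).elim (⟨_, ·⟩) (⟨_, ·⟩)
  obtain ⟨b, hb⟩ : ∃ b, π (X (.inr b)) ≠ 0 :=
    (map_X_ne_zero_or π hker (i := .inr ⟨0, by omega⟩) (j := .inr ⟨1, by omega⟩)
      (by simp)).elim (⟨_, ·⟩) (⟨_, ·⟩)
  have : Algebra.FiniteType K S :=
    S.fg_iff_finiteType.mp (diagonal_fg π g h S hS)
  have hadd := trdeg_add_eq K S (A := R)
  rw [trdeg_diagonal π hπ hfhom hker hg hh S hS ha hb,
    trdeg_of_ker_eq_span_singleton π hπ hf hker] at hadd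
  apply ringKrullDim_eq_of_trdeg_eq (K := K)
  obtain ⟨r, hr⟩ := Cardinal.lt_aleph0.mp (trdeg_lt_aleph0_of_finiteType (R := K) (S := S))
  rw [hr] at hadd ⊢
  have hadd' : r + 1 = Fintype.card (Fin m ⊕ Fin n) - 1 := by exact_mod_cast hadd
  simp only [Fintype.card_sum, Fintype.card_fin] at hadd'
  congr 1
  omega

/-- Let `R = K[x₁,…,x_m,y₁,…,y_n]/(f)` be an `ℕ²`-graded hypersurface, where
`deg xᵢ = (1,0)`, `deg yⱼ = (0,1)` and `f` is a nonzero bihomogeneous polynomial of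
bidegree `(d,e) ≠ (0,0)` such that `R` is a normal domain.  For positive integers
`g, h`, the diagonal subalgebra `R_Δ = ⊕_k R_{(gk,hk)}` has Krull dimension
`m + n - 2`. -/
theorem stmt13 (K : Type) [Field K] (m n d e g h : ℕ)
    (hm : 2 ≤ m) (hn : 2 ≤ n) (hde : (d, e) ≠ (0, 0)) (hg : 0 < g) (hh : 0 < h)
    (f : MvPolynomial (Fin m ⊕ Fin n) K)
    (hfhom : f.IsWeightedHomogeneous
      (Sum.elim (fun _ => ((1, 0) : ℕ × ℕ)) (fun _ => ((0, 1) : ℕ × ℕ))) (d, e))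
    (hf : f ≠ 0)
    (hdom : IsDomain (MvPolynomial (Fin m ⊕ Fin n) K ⧸
      (Ideal.span {f} : Ideal (MvPolynomial (Fin m ⊕ Fin n) K))))
    (hnormal : IsIntegrallyClosed (MvPolynomial (Fin m ⊕ Fin n) K ⧸
      (Ideal.span {f} : Ideal (MvPolynomial (Fin m ⊕ Fin n) K))))
    (S : Subalgebra K (MvPolynomial (Fin m ⊕ Fin n) K ⧸
      (Ideal.span {f} : Ideal (MvPolynomial (Fin m ⊕ Fin n) K))))
    (hS : Subalgebra.toSubmodule S = ⨆ k : ℕ,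
      Submodule.map (Ideal.Quotient.mkₐ K
          (Ideal.span {f} : Ideal (MvPolynomial (Fin m ⊕ Fin n) K))).toLinearMap
        (weightedHomogeneousSubmodule K
          (Sum.elim (fun _ => ((1, 0) : ℕ × ℕ)) (fun _ => ((0, 1) : ℕ × ℕ)))
          (g * k, h * k))) :
    ringKrullDim S = ((m + n - 2 : ℕ) : WithBot (WithTop ℕ)) := by
  exact ringKrullDim_diagonal _ (Ideal.Quotient.mkₐ_surjective K _) hf hfhom
    (Ideal.Quotient.mkₐ_ker K _) hm hn hg hh S hS
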